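/- Let h⁻¹ : ℝ^n → E be uniformly continuous and let q_ξ be a probability density on ℝ^n. Let ρ_k and ρ'_k, k ≥ 0, be two sequences of probability measures on ℝ^n such that ‖ρ_k − ρ'_k‖_BL → 0 as k → ∞. Then Δ_k → 0 as k → ∞, where Δ_k = ∫ sup_{f ∈ Lip} | ∫ f(h⁻¹(x)) q_ξ(y−x) ρ_k(dx) − ( ∫ f(h⁻¹(x)) q_ξ(y−x) ρ'_k(dx) / ∫ q_ξ(y−x) ρ'_k(dx) ) · ∫ q_ξ(y−x) ρ_k(dx) | dy, with the convention 0/0 = 1. -/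

import Mathlib

open MeasureTheory ProbabilityTheory Filter
open scoped ENNReal NNReal Topology

noncomputable section

/-- Division with the convention `0/0 = 1` (more precisely `a/0 = 1`). -/
def convDiv (a c : ℝ) : ℝ := if c = 0 then 1 else a / c

/-- The integrand
`sup_{f ∈ Lip} | ∫ f(h⁻¹(x)) q(y−x) ρ(dx) −
  (∫ f(h⁻¹(x)) q(y−x) ρ'(dx) / ∫ q(y−x) ρ'(dx)) ∫ q(y−x) ρ(dx) |`,
where the supremum runs over all `f : E → ℝ` with `‖f‖_∞ ≤ 1` and `‖f‖_L ≤ 1`,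
with the convention `0/0 = 1` for the ratio. -/
def innerSup {E : Type*} [PseudoMetricSpace E] {N : ℕ}
    (hinv : (Fin N → ℝ) → E) (q : (Fin N → ℝ) → ℝ)
    (ρ ρ' : Measure (Fin N → ℝ)) (y : Fin N → ℝ) : ℝ :=
  sSup { r : ℝ | ∃ f : E → ℝ, (∀ x, |f x| ≤ 1) ∧ LipschitzWith 1 f ∧
    r = |(∫ x, f (hinv x) * q (y - x) ∂ρ) -
      convDiv (∫ x, f (hinv x) * q (y - x) ∂ρ') (∫ x, q (y - x) ∂ρ') *
        ∫ x, q (y - x) ∂ρ| }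


/-- Dual bounded-Lipschitz distance between two measures on a metric space. -/
def blDist {S : Type*} [MeasurableSpace S] [PseudoMetricSpace S] (ρ ρ' : Measure S) : ℝ :=
  sSup { r : ℝ | ∃ f : S → ℝ, (∀ x, |f x| ≤ 1) ∧ LipschitzWith 1 f ∧
    r = |(∫ x, f x ∂ρ) - ∫ x, f x ∂ρ'| }

/-- Translation is continuous in `L¹`. -/
theorem exists_lintegral_enorm_translate_sub_le {V : Type*} [NormedAddCommGroup V]
    [NormedSpace ℝ V] [FiniteDimensional ℝ V] [MeasurableSpace V] [BorelSpace V]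
    (μ : Measure V) [μ.IsAddHaarMeasure] {q : V → ℝ} (hq : Integrable q μ)
    {ε : ℝ≥0∞} (hε : ε ≠ 0) :
    ∃ δ > 0, ∀ w : V, ‖w‖ < δ → ∫⁻ y, ‖q (w + y) - q y‖ₑ ∂μ ≤ ε := by
  have hqm : MemLp q 1 μ := memLp_one_iff_integrable.2 hq
  have : Fact ((1 : ℝ≥0∞) ≠ ∞) := ⟨ENNReal.one_ne_top⟩
  have hcont : Continuous fun w : V => DomAddAct.mk w +ᵥ hqm.toLp q :=
    (DomAddAct.continuous_mk).vadd continuous_const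
  have hev : ∀ᶠ w in 𝓝 (0 : V),
      edist (DomAddAct.mk w +ᵥ hqm.toLp q) (DomAddAct.mk (0 : V) +ᵥ hqm.toLp q) < ε :=
    hcont.continuousAt (Metric.eball_mem_nhds _ (pos_iff_ne_zero.2 hε))
  obtain ⟨δ, hδ, h⟩ := Metric.eventually_nhds_iff.1 hev
  refine ⟨δ, hδ, fun w hw => ?_⟩
  have hw' := (h (y := w) (by simpa using hw)).le
  rw [DomAddAct.mk_zero, zero_vadd, DomAddAct.mk_vadd_toLp, Lp.edist_toLp_toLp,
    eLpNorm_one_eq_lintegral_enorm] at hw'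
  simpa using hw'

theorem abs_integral_sub_integral_le_blDist {S : Type*} [MeasurableSpace S]
    [PseudoMetricSpace S] (ρ ρ' : Measure S) [IsProbabilityMeasure ρ]
    [IsProbabilityMeasure ρ'] {C : ℝ≥0} (hC : 1 ≤ C) {f : S → ℝ} (hf1 : ∀ x, |f x| ≤ 1)
    (hf : LipschitzWith C f) :
    |(∫ x, f x ∂ρ) - ∫ x, f x ∂ρ'| ≤ C * blDist ρ ρ' := by
  have hC0 : (0 : ℝ) < C := by exact_mod_cast one_pos.trans_le hC
  have hbdd : BddAbove { r : ℝ | ∃ f : S → ℝ, (∀ x, |f x| ≤ 1) ∧ LipschitzWith 1 f ∧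
      r = |(∫ x, f x ∂ρ) - ∫ x, f x ∂ρ'| } := by
    refine ⟨2, ?_⟩
    rintro r ⟨g, hg, -, rfl⟩
    have key (ν : Measure S) [IsProbabilityMeasure ν] : |∫ x, g x ∂ν| ≤ 1 := by
      simpa using norm_integral_le_of_norm_le_const (μ := ν) (f := g) (C := 1) (ae_of_all _ hg)
    linarith [abs_sub (∫ x, g x ∂ρ) (∫ x, g x ∂ρ'), key ρ, key ρ']
  have hmem := le_csSup hbdd ⟨fun x => (C : ℝ)⁻¹ * f x, fun x => ?_, ?_, rfl⟩
  · rw [integral_const_mul, integral_const_mul, ← mul_sub, abs_mul,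
      abs_of_pos (inv_pos.2 hC0), inv_mul_le_iff₀ hC0] at hmem
    exact hmem
  · rw [abs_mul, abs_of_pos (inv_pos.2 hC0), inv_mul_le_iff₀ hC0, mul_one]
    exact (hf1 x).trans (by exact_mod_cast hC)
  · refine LipschitzWith.of_dist_le_mul fun x y => ?_
    rw [Real.dist_eq, ← mul_sub, abs_mul, abs_of_pos (inv_pos.2 hC0), inv_mul_le_iff₀ hC0]
    simpa [Real.dist_eq] using hf.dist_le_mul x y

section Mollifier

variable {V : Type*} [NormedAddCommGroup V] [NormedSpace ℝ V] [FiniteDimensional ℝ V]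
  [MeasurableSpace V] [BorelSpace V] (μ : Measure V)
  (φ : ContDiffBump (0 : V))

theorem measurable_normed_sub : Measurable fun p : V × V => φ.normed μ (p.1 - p.2) :=
  (φ.continuous_normed.comp (continuous_fst.sub continuous_snd)).measurable

variable [μ.IsAddHaarMeasure]

theorem lintegral_enorm_normed_sub (x : V) : ∫⁻ z, ‖φ.normed μ (x - z)‖ₑ ∂μ = 1 := by
  rw [lintegral_sub_left_eq_self (fun z => ‖φ.normed μ z‖ₑ) x,
    ← ofReal_integral_norm_eq_lintegral_enorm φ.integrable_normed]
  simp_rw [Real.norm_of_nonneg (φ.nonneg_normed _)]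
  rw [φ.integral_normed, ENNReal.ofReal_one]

theorem integral_normed_sub (x : V) : ∫ z, φ.normed μ (x - z) ∂μ = 1 := by
  rw [integral_sub_left_eq_self (fun z => φ.normed μ z) μ x, φ.integral_normed]

theorem normed_sub_eq_zero {x z : V} (h : φ.rOut ≤ ‖x - z‖) : φ.normed μ (x - z) = 0 := by
  rw [← Function.notMem_support, φ.support_normed_eq]
  simpa using h

theorem integrable_normed_sub_mul_fst (ρ : Measure V) [SFinite ρ] {g : V → ℝ}
    (hg : Integrable g ρ) :
    Integrable (fun p : V × V => φ.normed μ (p.1 - p.2) * g p.1) (ρ.prod μ) := by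
  rw [integrable_prod_iff]
  · refine ⟨ae_of_all _ fun x => (φ.integrable_normed.comp_sub_left x).mul_const (g x), ?_⟩
    simp_rw [norm_mul, Real.norm_of_nonneg (φ.nonneg_normed _), integral_mul_const,
      integral_normed_sub, one_mul]
    exact hg.norm
  · exact (measurable_normed_sub μ φ).aestronglyMeasurable.mul hg.1.comp_fst

theorem integrable_normed_sub_mul_snd (ρ : Measure V) [IsFiniteMeasure ρ] {g : V → ℝ}
    (hg : Integrable g μ) :
    Integrable (fun p : V × V => φ.normed μ (p.1 - p.2) * g p.2) (ρ.prod μ) := by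
  obtain ⟨c, hc⟩ := φ.hasCompactSupport_normed.exists_bound_of_continuous
    (φ.continuous_normed (μ := μ))
  exact (hg.comp_snd ρ).bdd_mul (measurable_normed_sub μ φ).aestronglyMeasurable
    (ae_of_all _ fun p => hc _)

theorem exists_lintegral_enorm_normed_sub_sub_le :
    ∃ C : ℝ≥0, ∀ x x' : V,
      ∫⁻ z, ‖φ.normed μ (x - z) - φ.normed μ (x' - z)‖ₑ ∂μ ≤ C * edist x x' := by
  obtain ⟨K, hK⟩ := ContDiff.lipschitzWith_of_hasCompactSupport (𝕂 := ℝ)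
    (φ.hasCompactSupport_normed (μ := μ)) (φ.contDiff_normed (n := 1)) one_ne_zero
  have hfin : μ (Metric.closedBall 0 φ.rOut) ≠ ∞ := measure_closedBall_lt_top.ne
  refine ⟨K * (2 * (μ (Metric.closedBall 0 φ.rOut)).toNNReal), fun x x' => ?_⟩
  set A : Set V := Metric.closedBall x φ.rOut ∪ Metric.closedBall x' φ.rOut with hA
  have hAm : MeasurableSet A :=
    Metric.isClosed_closedBall.measurableSet.union Metric.isClosed_closedBall.measurableSet
  calc ∫⁻ z, ‖φ.normed μ (x - z) - φ.normed μ (x' - z)‖ₑ ∂μ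
      ≤ ∫⁻ z, A.indicator (fun _ => K * edist x x') z ∂μ := by
        refine lintegral_mono fun z => ?_
        by_cases hz : z ∈ A
        · rw [Set.indicator_of_mem hz, ← edist_eq_enorm_sub]
          simpa using hK (x - z) (x' - z)
        · simp only [hA, Set.mem_union, Metric.mem_closedBall, dist_eq_norm, not_or, not_le,
            norm_sub_rev z] at hz
          rw [normed_sub_eq_zero μ φ hz.1.le, normed_sub_eq_zero μ φ hz.2.le]
          simp
    _ = K * edist x x' * μ A := by rw [lintegral_indicator_const hAm]
    _ ≤ K * edist x x' * (2 * μ (Metric.closedBall 0 φ.rOut)) := by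
        gcongr
        refine (measure_union_le _ _).trans ?_
        rw [Measure.addHaar_closedBall_center, Measure.addHaar_closedBall_center μ x', two_mul]
    _ = _ := by
        push_cast
        rw [ENNReal.coe_toNNReal hfin]
        ring

theorem integrable_integral_normed_sub (ρ : Measure V) [IsFiniteMeasure ρ] :
    Integrable (fun z => ∫ x, φ.normed μ (x - z) ∂ρ) μ := by
  simpa using (integrable_normed_sub_mul_fst μ φ ρ (integrable_const (1 : ℝ))).integral_prod_right

/-- The total variation of the mollification of `ρ - ρ'` is controlled by `blDist ρ ρ'`. -/
theorem exists_lintegral_enorm_mollified_sub_le :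
    ∃ C : ℝ≥0, ∀ (ρ ρ' : Measure V) [IsProbabilityMeasure ρ] [IsProbabilityMeasure ρ'],
      ∫⁻ z, ‖(∫ x, φ.normed μ (x - z) ∂ρ) - ∫ x, φ.normed μ (x - z) ∂ρ'‖ₑ ∂μ ≤
        ENNReal.ofReal (C * blDist ρ ρ') := by
  obtain ⟨C, hC⟩ := exists_lintegral_enorm_normed_sub_sub_le μ φ
  refine ⟨max 1 C, fun ρ ρ' _ _ => ?_⟩
  have hint := integrable_integral_normed_sub μ φ
  have hmeas (ν : Measure V) [IsProbabilityMeasure ν] :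
      Measurable fun z => ∫ x, φ.normed μ (x - z) ∂ν :=
    (measurable_normed_sub μ φ).stronglyMeasurable.integral_prod_left'.measurable
  set D : V → ℝ := fun z => (∫ x, φ.normed μ (x - z) ∂ρ) - ∫ x, φ.normed μ (x - z) ∂ρ' with hD
  have hDm : Measurable D := (hmeas ρ).sub (hmeas ρ')
  set s : V → ℝ := fun z => if 0 ≤ D z then 1 else -1 with hs
  have hsm : Measurable s :=
    Measurable.ite (measurableSet_le measurable_const hDm) measurable_const measurable_const
  have hs1 (z : V) : ‖s z‖ = 1 := by
    simp only [hs]; split_ifs <;> simp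
  have hsD (z : V) : ‖D z‖ = s z * D z := by
    simp only [hs, Real.norm_eq_abs]
    split_ifs with h
    · rw [abs_of_nonneg h, one_mul]
    · rw [abs_of_neg (not_le.1 h), neg_one_mul]
  have hκs (x : V) : Integrable (fun z => s z * φ.normed μ (x - z)) μ :=
    (φ.integrable_normed.comp_sub_left x).bdd_mul hsm.aestronglyMeasurable
      (ae_of_all _ fun z => (hs1 z).le)
  have hsplit (ν : Measure V) [IsProbabilityMeasure ν] :
      ∫ z, s z * ∫ x, φ.normed μ (x - z) ∂ν ∂μ = ∫ x, ∫ z, s z * φ.normed μ (x - z) ∂μ ∂ν := by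
    rw [integral_integral_swap]
    · simp_rw [integral_const_mul]
    · have := integrable_normed_sub_mul_fst μ φ ν (integrable_const (1 : ℝ))
      simp only [mul_one] at this
      exact this.bdd_mul (hsm.comp measurable_snd).aestronglyMeasurable
        (ae_of_all _ fun p => (hs1 p.2).le)
  have hsint (ν : Measure V) [IsProbabilityMeasure ν] :
      Integrable (fun z => s z * ∫ x, φ.normed μ (x - z) ∂ν) μ :=
    (hint ν).bdd_mul hsm.aestronglyMeasurable (ae_of_all _ fun z => (hs1 z).le)
  have hDint : Integrable D μ := (hint ρ).sub (hint ρ')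
  rw [← ofReal_integral_norm_eq_lintegral_enorm hDint]
  refine ENNReal.ofReal_le_ofReal ?_
  calc ∫ z, ‖D z‖ ∂μ
      = (∫ z, s z * ∫ x, φ.normed μ (x - z) ∂ρ ∂μ) -
          ∫ z, s z * ∫ x, φ.normed μ (x - z) ∂ρ' ∂μ := by
        rw [← integral_sub (hsint ρ) (hsint ρ')]
        simp_rw [hsD, hD, mul_sub]
    _ ≤ |(∫ x, ∫ z, s z * φ.normed μ (x - z) ∂μ ∂ρ) -
          ∫ x, ∫ z, s z * φ.normed μ (x - z) ∂μ ∂ρ'| := by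
        rw [hsplit ρ, hsplit ρ']
        exact le_abs_self _
    _ ≤ _ := by
        refine abs_integral_sub_integral_le_blDist ρ ρ' (le_max_left _ _) (fun x => ?_) ?_
        · refine (norm_integral_le_integral_norm fun z => s z * φ.normed μ (x - z)).trans_eq ?_
          simp_rw [norm_mul, hs1, one_mul, Real.norm_of_nonneg (φ.nonneg_normed _)]
          exact integral_normed_sub μ φ x
        · refine LipschitzWith.weaken (K := C) (fun x x' => ?_) (le_max_right _ _)
          rw [edist_eq_enorm_sub, ← integral_sub (hκs x) (hκs x')]
          refine (enorm_integral_le_lintegral_enorm _).trans (le_trans (le_of_eq ?_) (hC x x'))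
          refine lintegral_congr fun z => ?_
          rw [← mul_sub, enorm_mul, ← ofReal_norm (s z), hs1, ENNReal.ofReal_one, one_mul]

theorem enorm_integral_sub_integral_mul_mollified_le (ρ : Measure V) [IsProbabilityMeasure ρ]
    {g : V → ℝ} (hgρ : Integrable g ρ) (hgμ : Integrable g μ) :
    ‖(∫ x, g x ∂ρ) - ∫ z, g z * ∫ x, φ.normed μ (x - z) ∂ρ ∂μ‖ₑ ≤
      ∫⁻ x, ∫⁻ z, ‖φ.normed μ (x - z)‖ₑ * ‖g x - g z‖ₑ ∂μ ∂ρ := by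
  have h₁ := integrable_normed_sub_mul_fst μ φ ρ hgρ
  have h₂ := integrable_normed_sub_mul_snd μ φ ρ hgμ
  have e₁ : ∫ x, g x ∂ρ = ∫ p, φ.normed μ (p.1 - p.2) * g p.1 ∂(ρ.prod μ) := by
    rw [integral_prod _ h₁]
    simp_rw [integral_mul_const, integral_normed_sub, one_mul]
  have e₂ : ∫ z, g z * ∫ x, φ.normed μ (x - z) ∂ρ ∂μ =
      ∫ p, φ.normed μ (p.1 - p.2) * g p.2 ∂(ρ.prod μ) := by
    rw [integral_prod_symm _ h₂]
    simp_rw [integral_mul_const, mul_comm]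
  rw [e₁, e₂, ← integral_sub h₁ h₂]
  refine (enorm_integral_le_lintegral_enorm _).trans_eq ?_
  refine (lintegral_prod _ (h₁.sub h₂).1.enorm).trans ?_
  simp only [Pi.sub_apply, ← mul_sub, enorm_mul]

theorem integrable_mul_integral_normed_sub (ρ : Measure V) [IsFiniteMeasure ρ] {g : V → ℝ}
    (hg : Integrable g μ) : Integrable (fun z => g z * ∫ x, φ.normed μ (x - z) ∂ρ) μ := by
  have h := (integrable_normed_sub_mul_snd μ φ ρ hg).integral_prod_right
  simp only [integral_mul_const] at h
  simpa only [mul_comm] using h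

theorem enorm_integral_sub_integral_le (ρ ρ' : Measure V) [IsProbabilityMeasure ρ]
    [IsProbabilityMeasure ρ'] {g : V → ℝ} (hgρ : Integrable g ρ) (hgρ' : Integrable g ρ')
    (hgμ : Integrable g μ) :
    ‖(∫ x, g x ∂ρ) - ∫ x, g x ∂ρ'‖ₑ ≤
      (∫⁻ x, ∫⁻ z, ‖φ.normed μ (x - z)‖ₑ * ‖g x - g z‖ₑ ∂μ ∂ρ) +
      (∫⁻ x, ∫⁻ z, ‖φ.normed μ (x - z)‖ₑ * ‖g x - g z‖ₑ ∂μ ∂ρ') +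
      ∫⁻ z, ‖g z‖ₑ *
        ‖(∫ x, φ.normed μ (x - z) ∂ρ) - ∫ x, φ.normed μ (x - z) ∂ρ'‖ₑ ∂μ := by
  have h₁ := enorm_integral_sub_integral_mul_mollified_le μ φ ρ hgρ hgμ
  have h₂ := enorm_integral_sub_integral_mul_mollified_le μ φ ρ' hgρ' hgμ
  set a := ∫ z, g z * ∫ x, φ.normed μ (x - z) ∂ρ ∂μ with ha
  set b := ∫ z, g z * ∫ x, φ.normed μ (x - z) ∂ρ' ∂μ with hb
  have h₃ : ‖a - b‖ₑ ≤ ∫⁻ z, ‖g z‖ₑ *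
        ‖(∫ x, φ.normed μ (x - z) ∂ρ) - ∫ x, φ.normed μ (x - z) ∂ρ'‖ₑ ∂μ := by
    rw [ha, hb, ← integral_sub (integrable_mul_integral_normed_sub μ φ ρ hgμ)
      (integrable_mul_integral_normed_sub μ φ ρ' hgμ)]
    refine (enorm_integral_le_lintegral_enorm _).trans_eq ?_
    simp_rw [← mul_sub, enorm_mul]
  calc ‖(∫ x, g x ∂ρ) - ∫ x, g x ∂ρ'‖ₑ
      = ‖((∫ x, g x ∂ρ) - a) - ((∫ x, g x ∂ρ') - b) + (a - b)‖ₑ := by congr 1; ring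
    _ ≤ _ := (enorm_add_le _ _).trans (add_le_add ((enorm_sub_le).trans (add_le_add h₁ h₂)) h₃)

theorem lintegral_lintegral_lintegral_normed_mul_le (ρ : Measure V) [IsProbabilityMeasure ρ]
    {q : V → ℝ} (hq : Measurable q) (hq1 : ∫⁻ y, ‖q y‖ₑ ∂μ = 1) {ε : ℝ≥0∞}
    (hε : ∀ w : V, ‖w‖ < φ.rOut → ∫⁻ y, ‖q (w + y) - q y‖ₑ ∂μ ≤ ε) :
    ∫⁻ y, ∫⁻ x, ∫⁻ z, ‖φ.normed μ (x - z)‖ₑ *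
      (ε * ‖q (y - x)‖ₑ + ‖q (y - x) - q (y - z)‖ₑ) ∂μ ∂ρ ∂μ ≤ 2 * ε := by
  have hκ : Measurable (φ.normed μ) := φ.continuous_normed.measurable
  have hm : Measurable fun p : (V × V) × V => ‖φ.normed μ (p.1.2 - p.2)‖ₑ *
      (ε * ‖q (p.1.1 - p.1.2)‖ₑ + ‖q (p.1.1 - p.1.2) - q (p.1.1 - p.2)‖ₑ) := by
    fun_prop
  rw [lintegral_lintegral_swap hm.lintegral_prod_right'.aemeasurable]
  calc ∫⁻ x, ∫⁻ y, ∫⁻ z, ‖φ.normed μ (x - z)‖ₑ *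
        (ε * ‖q (y - x)‖ₑ + ‖q (y - x) - q (y - z)‖ₑ) ∂μ ∂μ ∂ρ
      ≤ ∫⁻ x, 2 * ε ∂ρ := by
        refine lintegral_mono fun x => ?_
        rw [lintegral_lintegral_swap
          (Measurable.aemeasurable (by unfold Function.uncurry; fun_prop))]
        calc ∫⁻ z, ∫⁻ y, ‖φ.normed μ (x - z)‖ₑ *
              (ε * ‖q (y - x)‖ₑ + ‖q (y - x) - q (y - z)‖ₑ) ∂μ ∂μ
            ≤ ∫⁻ z, ‖φ.normed μ (x - z)‖ₑ * (2 * ε) ∂μ := by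
              refine lintegral_mono fun z => ?_
              rw [lintegral_const_mul _ (by fun_prop)]
              rcases lt_or_ge ‖x - z‖ φ.rOut with hxz | hxz
              · gcongr
                rw [lintegral_add_left (by fun_prop), lintegral_const_mul _ (by fun_prop),
                  lintegral_sub_right_eq_self (fun y => ‖q y‖ₑ) x, hq1, mul_one, two_mul]
                gcongr
                refine le_trans (le_of_eq ?_) (hε (z - x) (by rwa [norm_sub_rev]))
                rw [← lintegral_sub_right_eq_self (fun y => ‖q (z - x + y) - q y‖ₑ) z]
                refine lintegral_congr fun y => ?_
                rw [← edist_eq_enorm_sub, ← edist_eq_enorm_sub]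
                congr 2
                abel
              · simp [normed_sub_eq_zero μ φ hxz]
          _ = 2 * ε := by
              rw [lintegral_mul_const _ (by fun_prop), lintegral_enorm_normed_sub, one_mul]
    _ = 2 * ε := by simp

end Mollifier

theorem ae_integrable_comp_sub_left {V : Type*} [NormedAddCommGroup V] [NormedSpace ℝ V]
    [FiniteDimensional ℝ V] [MeasurableSpace V] [BorelSpace V] (μ : Measure V)
    [μ.IsAddHaarMeasure] (ρ : Measure V) [IsProbabilityMeasure ρ] {q : V → ℝ}
    (hq : Measurable q) (hqi : Integrable q μ) :
    ∀ᵐ y ∂μ, Integrable (fun x => q (y - x)) ρ := by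
  have h : Integrable (fun p : V × V => q (p.1 - p.2)) (μ.prod ρ) := by
    have hm : Measurable fun p : V × V => q (p.1 - p.2) := by fun_prop
    rw [integrable_prod_iff' hm.aestronglyMeasurable]
    refine ⟨ae_of_all _ fun x => hqi.comp_sub_right x, ?_⟩
    simp_rw [integral_sub_right_eq_self (fun y => ‖q y‖)]
    exact integrable_const _
  exact h.prod_right_ae

theorem ofReal_innerSup_le {E : Type*} [PseudoMetricSpace E] {N : ℕ}
    {hinv : (Fin N → ℝ) → E} {q : (Fin N → ℝ) → ℝ} (hq0 : ∀ y, 0 ≤ q y)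
    {ρ ρ' : Measure (Fin N → ℝ)} {y : Fin N → ℝ}
    (hint : Integrable (fun x => q (y - x)) ρ') {G : ℝ≥0∞}
    (hG : ∀ f : E → ℝ, (∀ x, |f x| ≤ 1) → LipschitzWith 1 f →
      ‖(∫ x, f (hinv x) * q (y - x) ∂ρ) - ∫ x, f (hinv x) * q (y - x) ∂ρ'‖ₑ ≤ G) :
    ENNReal.ofReal (innerSup hinv q ρ ρ' y) ≤ 2 * G := by
  rcases eq_or_ne G ∞ with rfl | hGtop
  · simp
  lift G to ℝ≥0 using hGtop
  have hG' (f : E → ℝ) (hf1 : ∀ x, |f x| ≤ 1) (hf : LipschitzWith 1 f) :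
      |(∫ x, f (hinv x) * q (y - x) ∂ρ) - ∫ x, f (hinv x) * q (y - x) ∂ρ'| ≤ G := by
    have := hG f hf1 hf
    rw [enorm_le_coe] at this
    exact_mod_cast this
  refine ENNReal.ofReal_le_of_le_toReal (Real.sSup_le ?_ ENNReal.toReal_nonneg)
  rintro r ⟨f, hf1, hf, rfl⟩
  have hfG := hG' f hf1 hf
  have h1G := hG' (fun _ => 1) (by simp) (LipschitzWith.const' 1)
  have hle : |∫ x, f (hinv x) * q (y - x) ∂ρ'| ≤ ∫ x, q (y - x) ∂ρ' := by
    refine norm_integral_le_of_norm_le (f := fun x => f (hinv x) * q (y - x)) hint (ae_of_all _ fun x => ?_)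
    rw [norm_mul, Real.norm_eq_abs, Real.norm_of_nonneg (hq0 _)]
    exact mul_le_of_le_one_left (hq0 _) (hf1 _)
  simp only [one_mul] at h1G
  rw [ENNReal.toReal_mul, ENNReal.toReal_ofNat, ENNReal.coe_toReal, two_mul]
  set a := ∫ x, f (hinv x) * q (y - x) ∂ρ
  set a' := ∫ x, f (hinv x) * q (y - x) ∂ρ'
  set c := ∫ x, q (y - x) ∂ρ
  set c' := ∫ x, q (y - x) ∂ρ'
  rcases eq_or_ne c' 0 with hc | hc
  · have ha' : a' = 0 := abs_nonpos_iff.1 (hc ▸ hle)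
    rw [convDiv, if_pos hc, one_mul]
    calc |a - c| = |(a - a') - (c - c')| := by rw [ha', hc, sub_zero, sub_zero]
      _ ≤ |a - a'| + |c - c'| := abs_sub _ _
      _ ≤ _ := add_le_add hfG h1G
  · have hc0 : 0 < c' := lt_of_le_of_ne ((abs_nonneg _).trans hle) hc.symm
    have hr : |a' / c'| ≤ 1 := by
      rwa [abs_div, abs_of_pos hc0, div_le_one hc0]
    rw [convDiv, if_neg hc]
    calc |a - a' / c' * c| = |(a - a') - a' / c' * (c - c')| := by
          congr 1; field_simp; ring
      _ ≤ |a - a'| + |a' / c' * (c - c')| := abs_sub _ _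
      _ ≤ _ := add_le_add hfG (by
          rw [abs_mul]
          exact (mul_le_of_le_one_left (abs_nonneg _) hr).trans h1G)

/-- If `φ` lives on a scale at which `hinv` oscillates by at most `ε`, then replacing `ρ` by `ρ'`
costs an oscillation term for each measure and a mollified total variation term. -/
theorem enorm_integral_lipschitz_mul_sub_le {V E : Type*} [NormedAddCommGroup V]
    [NormedSpace ℝ V] [FiniteDimensional ℝ V] [MeasurableSpace V] [BorelSpace V] (μ : Measure V)
    [μ.IsAddHaarMeasure] (φ : ContDiffBump (0 : V)) [PseudoMetricSpace E] {hinv : V → E}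
    (hcont : Continuous hinv) {ε : ℝ≥0∞}
    (hε : ∀ x z : V, ‖x - z‖ < φ.rOut → edist (hinv x) (hinv z) ≤ ε)
    (ρ ρ' : Measure V) [IsProbabilityMeasure ρ] [IsProbabilityMeasure ρ'] {q : V → ℝ}
    (hqi : Integrable q μ) {y : V}
    (hρ : Integrable (fun x => q (y - x)) ρ) (hρ' : Integrable (fun x => q (y - x)) ρ')
    {f : E → ℝ} (hf1 : ∀ x, |f x| ≤ 1) (hf : LipschitzWith 1 f) :
    ‖(∫ x, f (hinv x) * q (y - x) ∂ρ) - ∫ x, f (hinv x) * q (y - x) ∂ρ'‖ₑ ≤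
      (∫⁻ x, ∫⁻ z, ‖φ.normed μ (x - z)‖ₑ *
        (ε * ‖q (y - x)‖ₑ + ‖q (y - x) - q (y - z)‖ₑ) ∂μ ∂ρ) +
      (∫⁻ x, ∫⁻ z, ‖φ.normed μ (x - z)‖ₑ *
        (ε * ‖q (y - x)‖ₑ + ‖q (y - x) - q (y - z)‖ₑ) ∂μ ∂ρ') +
      ∫⁻ z, ‖q (y - z)‖ₑ *
        ‖(∫ x, φ.normed μ (x - z) ∂ρ) - ∫ x, φ.normed μ (x - z) ∂ρ'‖ₑ ∂μ := by
  have hfh : Continuous fun x => f (hinv x) := hf.continuous.comp hcont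
  have hfe (x : V) : ‖f (hinv x)‖ₑ ≤ 1 := by
    rw [← ofReal_norm]
    exact ENNReal.ofReal_le_one.2 (hf1 _)
  have hmul {ν : Measure V} (hν : Integrable (fun x => q (y - x)) ν) :
      Integrable (fun x => f (hinv x) * q (y - x)) ν :=
    hν.bdd_mul hfh.measurable.aestronglyMeasurable (ae_of_all _ fun x => hf1 _)
  have hosc (x z : V) : ‖φ.normed μ (x - z)‖ₑ *
      ‖f (hinv x) * q (y - x) - f (hinv z) * q (y - z)‖ₑ ≤ ‖φ.normed μ (x - z)‖ₑ *
        (ε * ‖q (y - x)‖ₑ + ‖q (y - x) - q (y - z)‖ₑ) := by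
    rcases lt_or_ge ‖x - z‖ φ.rOut with hxz | hxz
    · gcongr
      calc ‖f (hinv x) * q (y - x) - f (hinv z) * q (y - z)‖ₑ
          = ‖(f (hinv x) - f (hinv z)) * q (y - x) +
              f (hinv z) * (q (y - x) - q (y - z))‖ₑ := by congr 1; ring
        _ ≤ ‖f (hinv x) - f (hinv z)‖ₑ * ‖q (y - x)‖ₑ +
              ‖f (hinv z)‖ₑ * ‖q (y - x) - q (y - z)‖ₑ := by
            simpa only [enorm_mul] using
              enorm_add_le ((f (hinv x) - f (hinv z)) * q (y - x))
                (f (hinv z) * (q (y - x) - q (y - z)))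
        _ ≤ _ := by
            refine add_le_add (mul_le_mul_left ?_ _) (mul_le_of_le_one_left' (hfe z))
            rw [← edist_eq_enorm_sub]
            simpa using (hf (hinv x) (hinv z)).trans (mul_le_mul_right (hε x z hxz) _)
    · simp [normed_sub_eq_zero μ φ hxz]
  refine (enorm_integral_sub_integral_le μ φ ρ ρ' (hmul hρ) (hmul hρ')
    (hmul (hqi.comp_sub_left y))).trans ?_
  refine add_le_add (add_le_add ?_ ?_) ?_
  · exact lintegral_mono fun x => lintegral_mono fun z => hosc x z
  · exact lintegral_mono fun x => lintegral_mono fun z => hosc x z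
  · refine lintegral_mono fun z => ?_
    rw [enorm_mul]
    gcongr
    exact mul_le_of_le_one_left' (hfe z)

/-- The uniform estimate behind `coupling_integral_tendsto_zero`: at every scale, the integral is
small up to a multiple of the bounded-Lipschitz distance. -/
theorem exists_lintegral_innerSup_le {E : Type*} [PseudoMetricSpace E] {N : ℕ}
    {hinv : (Fin N → ℝ) → E} (hinv_uc : UniformContinuous hinv)
    {q : (Fin N → ℝ) → ℝ} (hq : Measurable q) (hq0 : ∀ y, 0 ≤ q y)
    (hq1 : ∫⁻ y, ENNReal.ofReal (q y) = 1) {ε : ℝ≥0∞} (hε : ε ≠ 0) :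
    ∃ C : ℝ≥0, ∀ (ρ ρ' : Measure (Fin N → ℝ)) [IsProbabilityMeasure ρ] [IsProbabilityMeasure ρ'],
      ∫⁻ y, ENNReal.ofReal (innerSup hinv q ρ ρ' y) ≤
        2 * (2 * ε + 2 * ε + ENNReal.ofReal (C * blDist ρ ρ')) := by
  have hqe : ∫⁻ y, ‖q y‖ₑ = 1 := by
    simpa only [Real.enorm_of_nonneg (hq0 _)] using hq1
  have hqi : Integrable q := ⟨hq.aestronglyMeasurable, by simp [HasFiniteIntegral, hqe]⟩
  obtain ⟨δ₁, hδ₁, hδq⟩ := exists_lintegral_enorm_translate_sub_le volume hqi hε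
  obtain ⟨δ₂, hδ₂, hδh⟩ : ∃ δ > 0, ∀ x z, ‖x - z‖ < δ → edist (hinv x) (hinv z) ≤ ε := by
    obtain ⟨δ, hδ, h⟩ := Metric.mem_uniformity_dist.1
      (hinv_uc (edist_mem_uniformity (pos_iff_ne_zero.2 hε)))
    exact ⟨δ, hδ, fun x z hxz => (h (by rwa [dist_eq_norm])).le⟩
  have hδ : 0 < min δ₁ δ₂ := lt_min hδ₁ hδ₂
  let φ : ContDiffBump (0 : Fin N → ℝ) := ⟨min δ₁ δ₂ / 2, min δ₁ δ₂, half_pos hδ, half_lt_self hδ⟩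
  have hφq (w : Fin N → ℝ) (hw : ‖w‖ < φ.rOut) : ∫⁻ y, ‖q (w + y) - q y‖ₑ ≤ ε :=
    hδq w (hw.trans_le (min_le_left _ _))
  have hφh (x z : Fin N → ℝ) (hxz : ‖x - z‖ < φ.rOut) : edist (hinv x) (hinv z) ≤ ε :=
    hδh x z (hxz.trans_le (min_le_right _ _))
  obtain ⟨C, hC⟩ := exists_lintegral_enorm_mollified_sub_le volume φ
  refine ⟨C, fun ρ ρ' _ _ => ?_⟩
  have hκ : Measurable (φ.normed volume) := φ.continuous_normed.measurable
  set D : (Fin N → ℝ) → ℝ := fun z =>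
    (∫ x, φ.normed volume (x - z) ∂ρ) - ∫ x, φ.normed volume (x - z) ∂ρ'
  have hDm : Measurable D :=
    (measurable_normed_sub volume φ).stronglyMeasurable.integral_prod_left'.measurable.sub
      (measurable_normed_sub volume φ).stronglyMeasurable.integral_prod_left'.measurable
  set J : Measure (Fin N → ℝ) → (Fin N → ℝ) → ℝ≥0∞ := fun ν y =>
    ∫⁻ x, ∫⁻ z, ‖φ.normed volume (x - z)‖ₑ *
      (ε * ‖q (y - x)‖ₑ + ‖q (y - x) - q (y - z)‖ₑ) ∂volume ∂ν
  have hJm (ν : Measure (Fin N → ℝ)) [IsProbabilityMeasure ν] : Measurable (J ν) := by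
    have hm : Measurable fun p : ((Fin N → ℝ) × (Fin N → ℝ)) × (Fin N → ℝ) =>
        ‖φ.normed volume (p.1.2 - p.2)‖ₑ *
          (ε * ‖q (p.1.1 - p.1.2)‖ₑ + ‖q (p.1.1 - p.1.2) - q (p.1.1 - p.2)‖ₑ) := by
      fun_prop
    exact hm.lintegral_prod_right'.lintegral_prod_right'
  have hbound : ∀ᵐ y, ENNReal.ofReal (innerSup hinv q ρ ρ' y) ≤
      2 * (J ρ y + J ρ' y + ∫⁻ z, ‖q (y - z)‖ₑ * ‖D z‖ₑ) := by
    filter_upwards [ae_integrable_comp_sub_left volume ρ hq hqi,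
      ae_integrable_comp_sub_left volume ρ' hq hqi] with y hy hy'
    exact ofReal_innerSup_le hq0 hy' fun f hf1 hf =>
      enorm_integral_lipschitz_mul_sub_le volume φ hinv_uc.continuous hφh ρ ρ' hqi hy hy' hf1 hf
  have hM : ∫⁻ y, ∫⁻ z, ‖q (y - z)‖ₑ * ‖D z‖ₑ = ∫⁻ z, ‖D z‖ₑ := by
    rw [lintegral_lintegral_swap (Measurable.aemeasurable (by unfold Function.uncurry; fun_prop))]
    refine lintegral_congr fun z => ?_
    rw [lintegral_mul_const _ (by fun_prop), lintegral_sub_right_eq_self (fun y => ‖q y‖ₑ) z, hqe,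
      one_mul]
  refine (lintegral_mono_ae hbound).trans ?_
  rw [lintegral_const_mul' _ _ ENNReal.ofNat_ne_top,
    lintegral_add_left (f := fun y => J ρ y + J ρ' y) ((hJm ρ).add (hJm ρ')),
    lintegral_add_left (hJm ρ), hM]
  gcongr
  · exact lintegral_lintegral_lintegral_normed_mul_le volume φ ρ hq hqe hφq
  · exact lintegral_lintegral_lintegral_normed_mul_le volume φ ρ' hq hqe hφq
  · exact hC ρ ρ'

/-- Let `h⁻¹ : ℝ^N → E` be uniformly continuous and `q` a probability
density on `ℝ^N`.  If `ρ_k, ρ'_k` are probability measures with `‖ρ_k − ρ'_k‖_BL → 0`,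
then `Δ_k := ∫ sup_{f ∈ Lip} |⋯| dy → 0` as `k → ∞` (with the convention `0/0 = 1`). -/
theorem coupling_integral_tendsto_zero
    {E : Type*} [MeasurableSpace E] [MetricSpace E] {N : ℕ}
    (hinv : (Fin N → ℝ) → E) (hinv_uc : UniformContinuous hinv)
    (q : (Fin N → ℝ) → ℝ) (hq : Measurable q) (hq0 : ∀ y, 0 ≤ q y)
    (hq1 : ∫⁻ y, ENNReal.ofReal (q y) = 1)
    (ρ ρ' : ℕ → Measure (Fin N → ℝ))
    (hρ : ∀ k, IsProbabilityMeasure (ρ k)) (hρ' : ∀ k, IsProbabilityMeasure (ρ' k))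
    (hbl : Tendsto (fun k => blDist (ρ k) (ρ' k)) atTop (𝓝 0)) :
    Tendsto (fun k => ∫⁻ y, ENNReal.ofReal (innerSup hinv q (ρ k) (ρ' k) y))
      atTop (𝓝 0) := by
  refine ENNReal.tendsto_nhds_zero.2 fun ε hε => ?_
  have hε' : ε / 10 ≠ 0 := (ENNReal.div_pos hε.ne' ENNReal.ofNat_ne_top).ne'
  obtain ⟨C, hC⟩ := exists_lintegral_innerSup_le hinv_uc hq hq0 hq1 hε'
  have hlim : Tendsto (fun k => ENNReal.ofReal (C * blDist (ρ k) (ρ' k))) atTop (𝓝 0) := by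
    simpa using ENNReal.tendsto_ofReal (hbl.const_mul (C : ℝ))
  filter_upwards [ENNReal.tendsto_nhds_zero.1 hlim _ (pos_iff_ne_zero.2 hε')] with k hk
  calc ∫⁻ y, ENNReal.ofReal (innerSup hinv q (ρ k) (ρ' k) y)
      ≤ 2 * (2 * (ε / 10) + 2 * (ε / 10) + ε / 10) := (hC _ _).trans (by gcongr)
    _ = 10 * (ε / 10) := by ring
    _ = ε := ENNReal.mul_div_cancel (by simp) (by simp)

end
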